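/- arXiv:2505.07016 — 2 statements merged into one kernel-verified Lean document; each statement's English description precedes it below -/
import Mathlib

section
/- Fix t ≥ 0 and set n = ⌈exp(D(p‖q) + t)⌉ and ε = (e^{−t/4} + 2·√(P_{X∼p}(log ρ(X) > D(p‖q) + t/2)))^{1/2}. Then, with probability at least 1 − 2ε over the draw of Y₁,…,Y_n i.i.d. from q, the importance-weighted selection satisfies |E_{m∼w}[f(Y_m)] − E_{X∼p}[f(X)]| ≤ 2 ‖f‖_{2,p} · ε/(1−ε). -/
open scoped BigOperators

/-- Kullback–Leibler divergence between mass functions on a countable alphabet. -/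
noncomputable def klDiv {𝒳 : Type*} (p q : 𝒳 → ℝ) : ℝ :=
  ∑' x, p x * Real.log (p x / q x)

/-!
Write `I n f` for the mean of `ρ f` over the sample, an unbiased estimator of `∫ f dP`, so that the
self-normalized estimator is `I n f / I n 1`. Cut `ρ f` at the level `log ρ ≤ c`. The part above the
cut contributes at most `2 ∫_{log ρ > c} |f| dP` to the mean absolute deviation of `I n f`; the part
below has second moment at most `exp c * ‖f‖²` under `Q`, hence contributes at most
`√(exp c / n) * ‖f‖`. For `c = D + t / 2` and `n ≥ exp (D + t)` the sum is at most `ε² * ‖f‖`, so by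
Markov's inequality `I n f` and `I n 1` deviate by more than `ε * ‖f‖` and `ε` with probability at
most `ε` each, and outside these two events the ratio is close to `∫ f dP`.
-/

open MeasureTheory ProbabilityTheory Set

lemma abs_div_sub_le_of_abs_sub_le {a b I F ε : ℝ} (hI : |I| ≤ F) (ha : |a - I| ≤ F * ε)
    (hb : |b - 1| ≤ ε) (hε : ε < 1) : |a / b - I| ≤ 2 * F * (ε / (1 - ε)) := by
  have hF : 0 ≤ F := (abs_nonneg I).trans hI
  have hε0 : 0 ≤ ε := (abs_nonneg _).trans hb
  have hb' : 1 - ε ≤ b := by linarith [(abs_le.1 hb).1]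
  have hb0 : 0 < b := by linarith
  have hnum : |(a - I) - I * (b - 1)| ≤ 2 * F * ε := by
    calc |(a - I) - I * (b - 1)| ≤ |a - I| + |I| * |b - 1| := abs_mul I _ ▸ abs_sub _ _
      _ ≤ F * ε + F * ε := by gcongr
      _ = 2 * F * ε := by ring
  calc |a / b - I| = |(a - I) - I * (b - 1)| / b := by
        rw [← abs_of_pos hb0, ← abs_div, abs_of_pos hb0]
        congr 1
        field_simp
        ring
    _ ≤ 2 * F * ε / (1 - ε) := div_le_div₀ (by positivity) hnum (by linarith) hb'
    _ = 2 * F * (ε / (1 - ε)) := mul_div_assoc _ _ _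

lemma sqrt_exp_div_le_exp {c t n : ℝ} (hn : Real.exp (c + t / 2) ≤ n) :
    √(Real.exp c / n) ≤ Real.exp (-t / 4) := by
  rw [Real.sqrt_le_left (Real.exp_pos _).le, div_le_iff₀ ((Real.exp_pos _).trans_le hn)]
  calc Real.exp c = Real.exp (-t / 4) ^ 2 * Real.exp (c + t / 2) := by
        rw [← Real.exp_nat_mul, ← Real.exp_add]
        congr 1
        push_cast
        ring
    _ ≤ Real.exp (-t / 4) ^ 2 * n := by gcongr

section Moments

variable {Ω : Type*} [MeasurableSpace Ω] {μ : Measure Ω}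

lemma setIntegral_abs_le_sqrt_mul_sqrt [IsFiniteMeasure μ] {f : Ω → ℝ} (hf : MemLp f 2 μ)
    (s : Set Ω) : ∫ x in s, |f x| ∂μ ≤ √(∫ x, f x ^ 2 ∂μ) * √(μ.real s) := by
  have holder := integral_mul_le_Lp_mul_Lq_of_nonneg (μ := μ.restrict s) (f := fun x => |f x|)
    (g := fun _ => 1) Real.HolderConjugate.two_two (.of_forall fun x => abs_nonneg (f x))
    (.of_forall fun _ => zero_le_one)
    (by simpa using! hf.abs.restrict s) (memLp_const 1)
  simp only [mul_one, Real.rpow_two, sq_abs, one_pow, integral_const, smul_eq_mul,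
    measureReal_restrict_apply_univ, ← Real.sqrt_eq_rpow] at holder
  refine holder.trans ?_
  gcongr
  · exact ae_of_all _ fun x => sq_nonneg (f x)
  · exact hf.integrable_sq
  · exact Measure.restrict_le_self

lemma integral_abs_le_sqrt [IsProbabilityMeasure μ] {f : Ω → ℝ} (hf : MemLp f 2 μ) :
    ∫ x, |f x| ∂μ ≤ √(∫ x, f x ^ 2 ∂μ) := by
  simpa using setIntegral_abs_le_sqrt_mul_sqrt hf univ

lemma measureReal_lt_abs_le_of_integral_abs_le {X : Ω → ℝ} (hX : Integrable X μ) {a ε : ℝ}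
    (ha : 0 ≤ a) (hε : 0 < ε) (h : ∫ ω, |X ω| ∂μ ≤ a * ε ^ 2) :
    μ.real {ω | a * ε < |X ω|} ≤ ε := by
  rcases ha.eq_or_lt with rfl | ha
  · have hX0 : (fun ω => |X ω|) =ᵐ[μ] 0 :=
      (integral_eq_zero_iff_of_nonneg (fun _ => abs_nonneg _) hX.abs).1
        (le_antisymm (by simpa using h) (integral_nonneg fun _ => abs_nonneg _))
    have hnull : μ {ω | 0 * ε < |X ω|} = 0 := by
      rw [measure_eq_zero_iff_ae_notMem]
      filter_upwards [hX0] with ω hω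
      simpa using hω
    simpa only [measureReal_def, hnull, ENNReal.toReal_zero] using hε.le
  · have markov := mul_meas_ge_le_integral_of_nonneg (.of_forall fun _ => abs_nonneg _) hX.abs
      (a * ε)
    have hfin : μ {ω | a * ε ≤ |X ω|} ≠ ⊤ := (hX.abs.measure_ge_lt_top (by positivity)).ne
    refine le_of_mul_le_mul_left ?_ (mul_pos ha hε)
    calc a * ε * μ.real {ω | a * ε < |X ω|}
        ≤ a * ε * μ.real {ω | a * ε ≤ |X ω|} := by
          gcongr
          exact fun hω => le_of_lt hω
      _ ≤ a * ε * ε := by linarith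

end Moments

section SampleMean

variable {Ω ι : Type*} [MeasurableSpace Ω] {Q : Measure Ω} [IsProbabilityMeasure Q] [Fintype ι]
  {g : Ω → ℝ}

lemma integrable_expect_comp_eval (hg : Integrable g Q) :
    Integrable (fun y : ι → Ω => 𝔼 j, g (y j)) (Measure.pi fun _ => Q) := by
  simp only [Fintype.expect_eq_sum_div_card]
  exact (integrable_finsetSum _ fun _ _ => integrable_comp_eval hg).div_const _

lemma memLp_two_expect_comp_eval (hg : MemLp g 2 Q) :
    MemLp (fun y : ι → Ω => 𝔼 j, g (y j)) 2 (Measure.pi fun _ => Q) := by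
  simp only [Fintype.expect_eq_sum_div_card, div_eq_inv_mul]
  exact (memLp_finsetSum _ fun j _ =>
    hg.comp_measurePreserving (measurePreserving_eval (fun _ => Q) j)).const_mul _

variable [Nonempty ι]

lemma integral_expect_comp_eval (hg : Integrable g Q) :
    ∫ y : ι → Ω, 𝔼 j, g (y j) ∂(Measure.pi fun _ => Q) = ∫ x, g x ∂Q := by
  have heval (j : ι) : ∫ y : ι → Ω, g (y j) ∂(Measure.pi fun _ => Q) = ∫ x, g x ∂Q :=
    integral_comp_eval (μ := fun _ => Q) hg.aestronglyMeasurable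
  simp only [Fintype.expect_eq_sum_div_card]
  rw [integral_div, integral_finsetSum _ fun _ _ => integrable_comp_eval hg]
  simp [heval]

lemma variance_expect_comp_eval (hg : MemLp g 2 Q) :
    Var[fun y : ι → Ω => 𝔼 j, g (y j); Measure.pi fun _ => Q] = Var[g; Q] / Fintype.card ι := by
  have hsum := variance_sum_pi (ι := ι) (μ := fun _ => Q) (X := fun _ => g) fun _ => hg
  simp only [Finset.sum_fn, Finset.sum_const, Finset.card_univ, nsmul_eq_mul] at hsum
  simp only [Fintype.expect_eq_sum_div_card, div_eq_inv_mul]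
  rw [variance_const_mul, hsum]
  field_simp

lemma integral_abs_expect_sub_integral_le_sqrt (hg : MemLp g 2 Q) :
    ∫ y : ι → Ω, |𝔼 j, g (y j) - ∫ x, g x ∂Q| ∂(Measure.pi fun _ => Q)
      ≤ √((∫ x, g x ^ 2 ∂Q) / Fintype.card ι) := by
  have hmean := memLp_two_expect_comp_eval (ι := ι) hg
  refine (integral_abs_le_sqrt (hmean.sub (memLp_const (∫ x, g x ∂Q)))).trans ?_
  gcongr
  calc ∫ y : ι → Ω, (𝔼 j, g (y j) - ∫ x, g x ∂Q) ^ 2 ∂(Measure.pi fun _ => Q)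
      = Var[fun y : ι → Ω => 𝔼 j, g (y j); Measure.pi fun _ => Q] := by
        rw [variance_eq_integral hmean.aemeasurable,
          integral_expect_comp_eval (hg.integrable one_le_two)]
    _ = Var[g; Q] / Fintype.card ι := variance_expect_comp_eval hg
    _ ≤ (∫ x, g x ^ 2 ∂Q) / Fintype.card ι := by
        gcongr
        exact variance_le_expectation_sq hg.aestronglyMeasurable

lemma integral_abs_expect_sub_integral_le_two_mul (hg : Integrable g Q) :
    ∫ y : ι → Ω, |𝔼 j, g (y j) - ∫ x, g x ∂Q| ∂(Measure.pi fun _ => Q)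
      ≤ 2 * ∫ x, |g x| ∂Q := by
  have habs := integrable_expect_comp_eval (ι := ι) hg.abs
  calc ∫ y : ι → Ω, |𝔼 j, g (y j) - ∫ x, g x ∂Q| ∂(Measure.pi fun _ => Q)
      ≤ ∫ y : ι → Ω, (𝔼 j, |g (y j)| + ∫ x, |g x| ∂Q) ∂(Measure.pi fun _ => Q) := by
        refine integral_mono ((integrable_expect_comp_eval hg).sub (integrable_const _)).abs
          (habs.add (integrable_const _)) fun y => (abs_sub _ _).trans ?_
        exact add_le_add (Finset.abs_expect_le _ _) abs_integral_le_integral_abs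
    _ = 2 * ∫ x, |g x| ∂Q := by
        rw [integral_add habs (integrable_const _), integral_expect_comp_eval hg.abs,
          integral_const, probReal_univ, one_smul, two_mul]

lemma integral_abs_expect_sub_integral_le_of_truncation (hg : Integrable g Q) {s : Set Ω}
    (hs : MeasurableSet s) (hg2 : MemLp (sᶜ.indicator g) 2 Q) :
    ∫ y : ι → Ω, |𝔼 j, g (y j) - ∫ x, g x ∂Q| ∂(Measure.pi fun _ => Q)
      ≤ 2 * ∫ x in s, |g x| ∂Q + √((∫ x in sᶜ, g x ^ 2 ∂Q) / Fintype.card ι) := by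
  set u := s.indicator g with hu
  set v := sᶜ.indicator g with hv
  have hui : Integrable u Q := hg.indicator hs
  have hvi : Integrable v Q := hg.indicator hs.compl
  have hdev {w : Ω → ℝ} (hw : Integrable w Q) :
      Integrable (fun y : ι → Ω => |𝔼 j, w (y j) - ∫ x, w x ∂Q|) (Measure.pi fun _ => Q) :=
    ((integrable_expect_comp_eval hw).sub (integrable_const _)).abs
  have hsplit (y : ι → Ω) : 𝔼 j, g (y j) - ∫ x, g x ∂Q
      = (𝔼 j, u (y j) - ∫ x, u x ∂Q) + (𝔼 j, v (y j) - ∫ x, v x ∂Q) := by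
    have huv : g = fun x => u x + v x := (indicator_self_add_compl s g).symm
    rw [huv, integral_add hui hvi, Finset.expect_add_distrib]
    ring
  have hu_abs : ∫ x, |u x| ∂Q = ∫ x in s, |g x| ∂Q := by
    simp only [← integral_indicator hs, hu, ← Real.norm_eq_abs, norm_indicator_eq_indicator_norm]
  have hv_sq : ∫ x, v x ^ 2 ∂Q = ∫ x in sᶜ, g x ^ 2 ∂Q := by
    rw [← integral_indicator hs.compl]
    congr with x
    by_cases hx : x ∈ sᶜ <;> simp [hv, hx]
  calc ∫ y : ι → Ω, |𝔼 j, g (y j) - ∫ x, g x ∂Q| ∂(Measure.pi fun _ => Q)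
      ≤ ∫ y : ι → Ω, (|𝔼 j, u (y j) - ∫ x, u x ∂Q| + |𝔼 j, v (y j) - ∫ x, v x ∂Q|)
          ∂(Measure.pi fun _ => Q) :=
        integral_mono (hdev hg) ((hdev hui).add (hdev hvi)) fun y => by
          simpa only [hsplit y] using abs_add_le _ _
    _ ≤ 2 * ∫ x, |u x| ∂Q + √((∫ x, v x ^ 2 ∂Q) / Fintype.card ι) := by
        rw [integral_add (hdev hui) (hdev hvi)]
        exact add_le_add (integral_abs_expect_sub_integral_le_two_mul hui)
          (integral_abs_expect_sub_integral_le_sqrt hg2)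
    _ = _ := by rw [hu_abs, hv_sq]

end SampleMean

section Density

variable {Ω : Type*} [MeasurableSpace Ω] {P Q : Measure Ω} {ρ : Ω → ℝ}

lemma integrable_iff_integrable_density_mul (hρm : Measurable ρ) (hρ : 0 ≤ ρ)
    (hP : P = Q.withDensity fun x => ENNReal.ofReal (ρ x)) {f : Ω → ℝ} :
    Integrable f P ↔ Integrable (fun x => ρ x * f x) Q := by
  rw [hP, integrable_withDensity_iff_integrable_smul' hρm.ennreal_ofReal (by simp)]
  simp only [ENNReal.toReal_ofReal (hρ _), smul_eq_mul]

lemma setIntegral_eq_setIntegral_density_mul (hρm : Measurable ρ) (hρ : 0 ≤ ρ)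
    (hP : P = Q.withDensity fun x => ENNReal.ofReal (ρ x)) (f : Ω → ℝ) {s : Set Ω}
    (hs : MeasurableSet s) : ∫ x in s, f x ∂P = ∫ x in s, ρ x * f x ∂Q := by
  rw [hP, setIntegral_withDensity_eq_setIntegral_toReal_smul hρm.ennreal_ofReal (by simp) f hs]
  simp only [ENNReal.toReal_ofReal (hρ _), smul_eq_mul]

lemma integral_eq_integral_density_mul (hρm : Measurable ρ) (hρ : 0 ≤ ρ)
    (hP : P = Q.withDensity fun x => ENNReal.ofReal (ρ x)) (f : Ω → ℝ) :
    ∫ x, f x ∂P = ∫ x, ρ x * f x ∂Q := by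
  simpa using setIntegral_eq_setIntegral_density_mul hρm hρ hP f .univ

variable {f : Ω → ℝ} {s : Set Ω} {M : ℝ}

lemma integrableOn_density_mul_sq (hρm : Measurable ρ) (hρ : 0 ≤ ρ) (hf : MemLp f 2 P)
    (hs : MeasurableSet s) (hM : ∀ x ∈ s, ρ x ≤ M) :
    IntegrableOn (fun x => ρ x * f x ^ 2) s P := by
  refine (hf.integrable_sq.const_mul M).integrableOn.mono'
    (hρm.aestronglyMeasurable.mul hf.integrable_sq.aestronglyMeasurable.restrict) ?_
  filter_upwards [ae_restrict_mem hs] with x hx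
  rw [Real.norm_of_nonneg (mul_nonneg (hρ x) (sq_nonneg _))]
  exact mul_le_mul_of_nonneg_right (hM x hx) (sq_nonneg _)

lemma memLp_two_indicator_density_mul [IsFiniteMeasure P] (hρm : Measurable ρ) (hρ : 0 ≤ ρ)
    (hP : P = Q.withDensity fun x => ENNReal.ofReal (ρ x)) (hf : MemLp f 2 P)
    (hs : MeasurableSet s) (hM : ∀ x ∈ s, ρ x ≤ M) :
    MemLp (s.indicator fun x => ρ x * f x) 2 Q := by
  have hρf : Integrable (fun x => ρ x * f x) Q :=
    (integrable_iff_integrable_density_mul hρm hρ hP).1 (hf.integrable one_le_two)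
  rw [memLp_two_iff_integrable_sq (hρf.indicator hs).aestronglyMeasurable]
  have hsq := (integrable_iff_integrable_density_mul hρm hρ hP).1
    ((integrableOn_density_mul_sq hρm hρ hf hs hM).integrable_indicator hs)
  refine hsq.congr (.of_forall fun x => ?_)
  by_cases hx : x ∈ s
  · simp only [indicator_of_mem hx]
    ring
  · simp [hx]

lemma setIntegral_sq_density_mul_le (hρm : Measurable ρ) (hρ : 0 ≤ ρ)
    (hP : P = Q.withDensity fun x => ENNReal.ofReal (ρ x)) (hf : MemLp f 2 P)
    (hs : MeasurableSet s) (hM : ∀ x ∈ s, ρ x ≤ M) (hM0 : 0 ≤ M) :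
    ∫ x in s, (ρ x * f x) ^ 2 ∂Q ≤ M * ∫ x, f x ^ 2 ∂P := by
  calc ∫ x in s, (ρ x * f x) ^ 2 ∂Q = ∫ x in s, ρ x * f x ^ 2 ∂P := by
        rw [setIntegral_eq_setIntegral_density_mul hρm hρ hP _ hs]
        congr with x
        ring
    _ ≤ ∫ x in s, M * f x ^ 2 ∂P :=
        setIntegral_mono_on (integrableOn_density_mul_sq hρm hρ hf hs hM)
          (hf.integrable_sq.const_mul M).integrableOn hs fun x hx =>
            mul_le_mul_of_nonneg_right (hM x hx) (sq_nonneg _)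
    _ ≤ M * ∫ x, f x ^ 2 ∂P := by
        rw [integral_const_mul]
        exact mul_le_mul_of_nonneg_left (setIntegral_le_integral hf.integrable_sq
          (ae_of_all _ fun x => sq_nonneg (f x))) hM0

end Density

section ImportanceSampling

variable {Ω ι : Type*} [MeasurableSpace Ω] {P Q : Measure Ω} [IsProbabilityMeasure Q] {ρ : Ω → ℝ}
  [Fintype ι] [Nonempty ι] {f : Ω → ℝ}

theorem integral_abs_expect_density_mul_sub_integral_le [IsFiniteMeasure P] (hρm : Measurable ρ)
    (hρ : 0 ≤ ρ) (hP : P = Q.withDensity fun x => ENNReal.ofReal (ρ x)) (hf : MemLp f 2 P) (c : ℝ) :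
    ∫ y : ι → Ω, |𝔼 j, ρ (y j) * f (y j) - ∫ x, f x ∂P| ∂(Measure.pi fun _ => Q)
      ≤ √(∫ x, f x ^ 2 ∂P) *
        (√(Real.exp c / Fintype.card ι) + 2 * √(P.real {x | c < Real.log (ρ x)})) := by
  set s := {x | c < Real.log (ρ x)}
  have hs : MeasurableSet s := measurableSet_lt measurable_const hρm.log
  have hbound : ∀ x ∈ sᶜ, ρ x ≤ Real.exp c := fun x hx =>
    (Real.le_exp_log (ρ x)).trans (Real.exp_le_exp.2 (not_lt.1 hx))
  have hhead : ∫ x in s, |ρ x * f x| ∂Q ≤ √(∫ x, f x ^ 2 ∂P) * √(P.real s) := by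
    simp only [abs_mul, abs_of_nonneg (hρ _)]
    rw [← setIntegral_eq_setIntegral_density_mul hρm hρ hP _ hs]
    exact setIntegral_abs_le_sqrt_mul_sqrt hf s
  have htail : √((∫ x in sᶜ, (ρ x * f x) ^ 2 ∂Q) / Fintype.card ι)
      ≤ √(∫ x, f x ^ 2 ∂P) * √(Real.exp c / Fintype.card ι) := by
    rw [← Real.sqrt_mul (integral_nonneg fun x => sq_nonneg (f x)), ← mul_div_assoc,
      mul_comm _ (Real.exp c)]
    gcongr
    exact setIntegral_sq_density_mul_le hρm hρ hP hf hs.compl hbound (Real.exp_pos c).le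
  have htrunc := integral_abs_expect_sub_integral_le_of_truncation (ι := ι)
    ((integrable_iff_integrable_density_mul hρm hρ hP).1 (hf.integrable one_le_two)) hs
    (memLp_two_indicator_density_mul hρm hρ hP hf hs.compl hbound)
  rw [← integral_eq_integral_density_mul hρm hρ hP] at htrunc
  linarith

lemma measureReal_lt_abs_expect_density_mul_sub_integral_le [IsFiniteMeasure P]
    (hρm : Measurable ρ) (hρ : 0 ≤ ρ) (hP : P = Q.withDensity fun x => ENNReal.ofReal (ρ x))
    (hf : MemLp f 2 P) {c ε : ℝ} (hε : 0 < ε)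
    (hcε : √(Real.exp c / Fintype.card ι) + 2 * √(P.real {x | c < Real.log (ρ x)}) ≤ ε ^ 2) :
    (Measure.pi fun _ : ι => Q).real
      {y | √(∫ x, f x ^ 2 ∂P) * ε < |𝔼 j, ρ (y j) * f (y j) - ∫ x, f x ∂P|} ≤ ε := by
  have hρf := (integrable_iff_integrable_density_mul hρm hρ hP).1 (hf.integrable one_le_two)
  refine measureReal_lt_abs_le_of_integral_abs_le
    ((integrable_expect_comp_eval hρf).sub (integrable_const _)) (Real.sqrt_nonneg _) hε ?_
  exact (integral_abs_expect_density_mul_sub_integral_le hρm hρ hP hf c).trans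
    (mul_le_mul_of_nonneg_left hcε (Real.sqrt_nonneg _))

end ImportanceSampling

theorem stmt0_general {Ω ι : Type*} [MeasurableSpace Ω] [Fintype ι] {P Q : Measure Ω}
    [IsProbabilityMeasure P] [IsProbabilityMeasure Q] {ρ : Ω → ℝ} (hρm : Measurable ρ) (hρ : 0 ≤ ρ)
    (hP : P = Q.withDensity fun x => ENNReal.ofReal (ρ x)) {f : Ω → ℝ} (hf : MemLp f 2 P)
    {L t : ℝ} (hι : Real.exp (L + t) ≤ Fintype.card ι) {ε : ℝ}
    (hε : ε = √(Real.exp (-t / 4) + 2 * √(P.real {x | L + t / 2 < Real.log (ρ x)}))) :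
    1 - 2 * ε ≤ (Measure.pi fun _ : ι => Q).real
      {y | |(∑ j, ρ (y j) * f (y j)) / (∑ j, ρ (y j)) - ∫ x, f x ∂P|
        ≤ 2 * √(∫ x, f x ^ 2 ∂P) * (ε / (1 - ε))} := by
  have hcard : (0 : ℝ) < Fintype.card ι := (Real.exp_pos _).trans_le hι
  have : Nonempty ι := Fintype.card_pos_iff.1 (mod_cast hcard)
  have hε0 : 0 < ε := hε ▸ Real.sqrt_pos.2 (by positivity)
  rcases le_or_gt 1 ε with hε1 | hε1
  · exact le_trans (by linarith) measureReal_nonneg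
  have hrate : √(Real.exp (L + t / 2) / Fintype.card ι)
      + 2 * √(P.real {x | L + t / 2 < Real.log (ρ x)}) ≤ ε ^ 2 := by
    rw [hε, Real.sq_sqrt (by positivity)]
    gcongr
    exact sqrt_exp_div_le_exp (by rwa [add_assoc, add_halves])
  have hnum := measureReal_lt_abs_expect_density_mul_sub_integral_le hρm hρ hP hf hε0 hrate
  have hden := measureReal_lt_abs_expect_density_mul_sub_integral_le (f := 1) hρm hρ hP
    (memLp_const 1) hε0 hrate
  simp only [Pi.one_apply, one_pow, mul_one, integral_const, probReal_univ, one_smul,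
    Real.sqrt_one, one_mul] at hden
  set ν := Measure.pi fun _ : ι => Q
  set good := {y : ι → Ω | |(∑ j, ρ (y j) * f (y j)) / (∑ j, ρ (y j)) - ∫ x, f x ∂P|
    ≤ 2 * √(∫ x, f x ^ 2 ∂P) * (ε / (1 - ε))}
  set badNum := {y : ι → Ω |
    √(∫ x, f x ^ 2 ∂P) * ε < |𝔼 j, ρ (y j) * f (y j) - ∫ x, f x ∂P|}
  set badDen := {y : ι → Ω | ε < |𝔼 j, ρ (y j) - 1|}
  have hcover : univ ⊆ good ∪ (badNum ∪ badDen) := fun y _ => or_iff_not_imp_right.2 fun hy => by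
    obtain ⟨hyn, hyd⟩ := not_or.1 hy
    have hratio := abs_div_sub_le_of_abs_sub_le
      (abs_integral_le_integral_abs.trans (integral_abs_le_sqrt hf)) (not_lt.1 hyn) (not_lt.1 hyd)
      hε1
    rwa [Fintype.expect_eq_sum_div_card, Fintype.expect_eq_sum_div_card,
      div_div_div_cancel_right₀ hcard.ne'] at hratio
  have hunion : 1 ≤ ν.real good + (ν.real badNum + ν.real badDen) :=
    calc 1 = ν.real univ := probReal_univ.symm
      _ ≤ ν.real (good ∪ (badNum ∪ badDen)) := measureReal_mono hcover
      _ ≤ ν.real good + (ν.real badNum + ν.real badDen) :=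
        (measureReal_union_le _ _).trans (by gcongr; exact measureReal_union_le _ _)
  linarith

section CountableSpace

variable {α : Type*} [Countable α] [MeasurableSpace α] [MeasurableSingletonClass α]

lemma integral_eq_tsum_measureReal_mul (μ : Measure α) [IsFiniteMeasure μ] (f : α → ℝ) :
    ∫ x, f x ∂μ = ∑' x, μ.real {x} * f x := by
  conv_lhs => rw [← Measure.sum_smul_dirac μ, integral_sum_dirac fun x => measure_ne_top μ {x}]
  rfl

lemma measureReal_eq_tsum_indicator (μ : Measure α) [IsFiniteMeasure μ] (s : Set α) :
    μ.real s = ∑' x, s.indicator (fun x => μ.real {x}) x := by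
  rw [← integral_indicator_one s.to_countable.measurableSet, integral_eq_tsum_measureReal_mul]
  congr with x
  by_cases hx : x ∈ s <;> simp [hx]

lemma memLp_two_iff_summable (μ : Measure α) [IsFiniteMeasure μ] {f : α → ℝ} :
    MemLp f 2 μ ↔ Summable fun x => μ.real {x} * f x ^ 2 := by
  rw [memLp_two_iff_integrable_sq (measurable_of_countable f).aestronglyMeasurable]
  conv_lhs => rw [← Measure.sum_smul_dirac μ]
  rw [integrable_sum_dirac_iff fun x => measure_ne_top μ {x}]
  simp [measureReal_def]

lemma eq_withDensity_ofReal_measureReal_div {P Q : Measure α} [IsFiniteMeasure P]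
    [IsFiniteMeasure Q] (h : ∀ x, Q.real {x} = 0 → P.real {x} = 0) :
    P = Q.withDensity fun x => ENNReal.ofReal (P.real {x} / Q.real {x}) := by
  refine Measure.ext_of_singleton fun x => ?_
  rw [withDensity_apply _ (measurableSet_singleton x), lintegral_singleton,
    ← ofReal_measureReal (μ := Q), ← ENNReal.ofReal_mul (by positivity),
    div_mul_cancel_of_imp (h x), ofReal_measureReal]

lemma measureReal_pi_eq_tsum_indicator {ι : Type*} [Fintype ι] (μ : Measure α) [IsFiniteMeasure μ]
    (s : Set (ι → α)) : (Measure.pi fun _ => μ).real s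
      = ∑' y : ι → α, s.indicator (fun y => ∏ j, μ.real {y j}) y := by
  rw [measureReal_eq_tsum_indicator]
  simp only [measureReal_def, Measure.pi_singleton, ENNReal.toReal_prod]

end CountableSpace

section PMFOfHasSum

variable {α : Type*} {p : α → ℝ} (hp0 : ∀ x, 0 ≤ p x) (hp1 : HasSum p 1)

/-- The bundled probability mass function of a nonnegative real family with sum `1`. It gives access
to the product measures of an i.i.d. sample from `p`. -/
noncomputable def pmfOfHasSum : PMF α :=
  ⟨fun x => ENNReal.ofReal (p x), by
    rw [ENNReal.summable.hasSum_iff, ← ENNReal.ofReal_tsum_of_nonneg hp0 hp1.summable,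
      hp1.tsum_eq, ENNReal.ofReal_one]⟩

lemma toMeasure_pmfOfHasSum_real_singleton [MeasurableSpace α] [MeasurableSingletonClass α]
    (x : α) : (pmfOfHasSum hp0 hp1).toMeasure.real {x} = p x := by
  rw [measureReal_def, PMF.toMeasure_apply_singleton _ _ (measurableSet_singleton x)]
  exact ENNReal.toReal_ofReal (hp0 x)

end PMFOfHasSum

/-- high-probability bias bound for minimal random coding /
importance-weighted selection. -/
theorem stmt0 {𝒳 : Type*} [Countable 𝒳]
    (p q : 𝒳 → ℝ)
    (hp0 : ∀ x, 0 ≤ p x) (hq0 : ∀ x, 0 ≤ q x)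
    (hp1 : HasSum p 1) (hq1 : HasSum q 1)
    (hac : ∀ x, q x = 0 → p x = 0)
    (hKL : Summable fun x => p x * Real.log (p x / q x))
    (f : 𝒳 → ℝ)
    (hf2 : Summable fun x => p x * f x ^ 2)
    (t : ℝ) (ht : 0 ≤ t)
    (n : ℕ) (hn : n = ⌈Real.exp (klDiv p q + t)⌉₊)
    (ε : ℝ)
    (hε : ε = Real.sqrt (Real.exp (-t / 4)
      + 2 * Real.sqrt (∑' x, Set.indicator
          {x : 𝒳 | klDiv p q + t / 2 < Real.log (p x / q x)} p x))) :
    1 - 2 * ε ≤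
      ∑' y : Fin n → 𝒳,
        Set.indicator
          {y : Fin n → 𝒳 |
            |(∑ j, p (y j) / q (y j) * f (y j)) / (∑ j, p (y j) / q (y j))
                - ∑' x, p x * f x|
              ≤ 2 * Real.sqrt (∑' x, p x * f x ^ 2) * (ε / (1 - ε))}
          (fun y => ∏ j, q (y j)) y := by
  let _ : MeasurableSpace 𝒳 := ⊤
  simpa only [measureReal_pi_eq_tsum_indicator, integral_eq_tsum_measureReal_mul,
    toMeasure_pmfOfHasSum_real_singleton] using
    stmt0_general (ι := Fin n) (P := (pmfOfHasSum hp0 hp1).toMeasure)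
      (Q := (pmfOfHasSum hq0 hq1).toMeasure) (measurable_of_countable _) (fun _ => by positivity)
      (eq_withDensity_ofReal_measureReal_div <| by
        simpa only [toMeasure_pmfOfHasSum_real_singleton] using hac)
      ((memLp_two_iff_summable _).2 <| by
        simpa only [toMeasure_pmfOfHasSum_real_singleton] using hf2)
      (L := klDiv p q) (t := t) (by simpa [hn] using Nat.le_ceil _) (by
        rw [measureReal_eq_tsum_indicator]
        simpa only [toMeasure_pmfOfHasSum_real_singleton] using hε)
end

section
/- Let h : 𝒞 → ℝ≥0 be any nonnegative function, and let n_c ≥ 2. Draw C₁,…,C_{n_c} i.i.d. from p_C and an index m from the random categorical distribution w_C on {1,…,n_c} given by w_C(j) = (p_{QC}(C_j)/p_C(C_j)) / Σ_{j'=1}^{n_c} (p_{QC}(C_{j'})/p_C(C_{j'})). Then E[h(C_m)] ≤ (χ²(p_C‖p_{QC}) + 1) · (n_c/(n_c − 1)) · E_{c∼p_{QC}}[h(c)], where the expectation on the left is over both the samples C₁,…,C_{n_c} and the index m. -/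
open scoped BigOperators

/-- Chi-squared divergence `χ²(pC‖pQC) = Σ_{c : pQC(c)>0} pC(c)²/pQC(c) − 1`
between mass functions on a finite alphabet. -/
noncomputable def chiSq {𝒞 : Type*} [Fintype 𝒞] (pC pQC : 𝒞 → ℝ) : ℝ :=
  (∑ c, Set.indicator {c : 𝒞 | 0 < pQC c} (fun c => pC c ^ 2 / pQC c) c) - 1

/-!
The ratio `w = pQC / pC` turns `pC`-expectations into `pQC`-expectations, and
`E_{pC}[1 / w] = χ²(pC‖pQC) + 1`. The obstacle is that the normalizing sum `∑ j, w (C j)`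
involves the selected sample `C m`. Dropping the term `j = m` only increases the selection
probability, and the harmonic–arithmetic mean inequality bounds what remains:
`w (C m) / ∑ j, w (C j) ≤ (n - 1)⁻² ∑ j ≠ m, w (C m) / w (C j)`.
Each summand involves two distinct, hence independent, samples, so its expectation against `h (C m)`
factors as `E_{pQC}[h] · (χ² + 1)`, and there are `n (n - 1)` of them.
-/

section IndependentCoordinates

variable {ι α R : Type*} [Fintype ι] [DecidableEq ι] [Fintype α]

lemma sum_pi_prod_mul_prod [CommSemiring R] {p : α → R} (hp : ∑ a, p a = 1) (s : Finset ι)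
    (f : ι → α → R) :
    ∑ C : ι → α, (∏ k, p (C k)) * ∏ k ∈ s, f k (C k) = ∏ k ∈ s, ∑ a, p a * f k a := by
  have factor (k : ι) : (if k ∈ s then ∑ a, p a * f k a else 1) =
      ∑ a, p a * if k ∈ s then f k a else 1 := by
    split_ifs <;> simp [hp]
  simp only [← Fintype.prod_ite_mem s, factor, Fintype.prod_sum, Finset.prod_mul_distrib]

lemma sum_pi_prod_mul_mul [CommSemiring R] {p : α → R} (hp : ∑ a, p a = 1) {i j : ι}
    (hij : i ≠ j) (f g : α → R) :
    ∑ C : ι → α, (∏ k, p (C k)) * (f (C i) * g (C j)) =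
      (∑ a, p a * f a) * ∑ a, p a * g a := by
  simpa [Finset.prod_pair hij, hij.symm] using
    sum_pi_prod_mul_prod hp {i, j} fun k => if k = i then f else g

lemma sum_pi_prod_mul_sum_sum_erase [CommRing R] {p : α → R} (hp : ∑ a, p a = 1) (f g : α → R) :
    ∑ C : ι → α, (∏ k, p (C k)) * ∑ m, ∑ j ∈ Finset.univ.erase m, f (C m) * g (C j) =
      Fintype.card ι * (Fintype.card ι - 1) * ((∑ a, p a * f a) * ∑ a, p a * g a) := by
  calc
    _ = ∑ m : ι, ∑ j ∈ Finset.univ.erase m,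
          ∑ C : ι → α, (∏ k, p (C k)) * (f (C m) * g (C j)) := by
      simp only [Finset.mul_sum, Finset.sum_comm (s := (Finset.univ : Finset (ι → α)))]
    _ = ∑ m : ι, ∑ _j ∈ Finset.univ.erase m, (∑ a, p a * f a) * ∑ a, p a * g a := by
      refine Finset.sum_congr rfl fun m _ => Finset.sum_congr rfl fun j hj => ?_
      exact sum_pi_prod_mul_mul hp (Finset.ne_of_mem_erase hj).symm f g
    _ = _ := by
      simp only [Finset.sum_const, nsmul_eq_mul, Finset.mem_univ, Finset.cast_card_erase_of_mem,
        Finset.card_univ, mul_assoc]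

end IndependentCoordinates

section SelfNormalizedWeights

variable {ι α K : Type*} [Field K] [LinearOrder K] [IsStrictOrderedRing K]

lemma inv_sum_le_sum_inv_div_card_sq (s : Finset ι) {r : ι → K} (hr : ∀ i ∈ s, 0 < r i) :
    (∑ i ∈ s, r i)⁻¹ ≤ (∑ i ∈ s, (r i)⁻¹) / (s.card : K) ^ 2 := by
  rcases s.eq_empty_or_nonempty with rfl | hs
  · simp
  have sedrakyan : (s.card : K) ^ 2 / ∑ i ∈ s, r i ≤ ∑ i ∈ s, (r i)⁻¹ := by
    simpa using Finset.sq_sum_div_le_sum_sq_div s (fun _ => (1 : K)) hr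
  have := hs.card_pos
  rwa [le_div_iff₀' (by positivity), ← div_eq_mul_inv]

/- Only an inequality: the left side misses the mass of `q` where `p` vanishes. -/
lemma sum_mul_div_mul_le (s : Finset ι) {p q h : ι → K} (hq : ∀ i ∈ s, 0 ≤ q i)
    (hh : ∀ i ∈ s, 0 ≤ h i) :
    ∑ i ∈ s, p i * (q i / p i * h i) ≤ ∑ i ∈ s, q i * h i := by
  refine Finset.sum_le_sum fun i hi => ?_
  rcases eq_or_ne (p i) 0 with hp | hp
  · simpa only [hp, zero_mul] using mul_nonneg (hq i hi) (hh i hi)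
  · rw [← mul_assoc, mul_div_cancel₀ _ hp]

variable [Fintype ι] [DecidableEq ι] [Nontrivial ι]

lemma div_sum_le_sum_erase_mul_inv_div {r : ι → K} (hr : ∀ i, 0 < r i) (m : ι) :
    r m / ∑ j, r j ≤ (∑ j ∈ Finset.univ.erase m, r m * (r j)⁻¹) / (Fintype.card ι - 1) ^ 2 := by
  have erase_sum_pos : 0 < ∑ j ∈ Finset.univ.erase m, r j :=
    Finset.sum_pos (fun j _ => hr j) Finset.univ_nontrivial.erase_nonempty
  have erase_sum_le : ∑ j ∈ Finset.univ.erase m, r j ≤ ∑ j, r j :=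
    Finset.sum_le_univ_sum_of_nonneg fun j => (hr j).le
  have card_erase : ((Finset.univ.erase m).card : K) = Fintype.card ι - 1 :=
    Finset.cast_card_erase_of_mem (Finset.mem_univ m)
  rw [← Finset.mul_sum, mul_div_assoc, div_eq_mul_inv, ← card_erase]
  have := (hr m).le
  gcongr
  calc (∑ j, r j)⁻¹
    _ ≤ (∑ j ∈ Finset.univ.erase m, r j)⁻¹ := inv_anti₀ erase_sum_pos erase_sum_le
    _ ≤ _ := inv_sum_le_sum_inv_div_card_sq _ fun j _ => hr j

lemma sum_div_sum_mul_le {r g : ι → K} (hr : ∀ i, 0 < r i) (hg : ∀ i, 0 ≤ g i) :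
    ∑ m, r m / (∑ j, r j) * g m ≤
      (∑ m, ∑ j ∈ Finset.univ.erase m, r m * g m * (r j)⁻¹) / (Fintype.card ι - 1) ^ 2 := by
  rw [Finset.sum_div]
  gcongr with m
  calc r m / (∑ j, r j) * g m
    _ ≤ (∑ j ∈ Finset.univ.erase m, r m * (r j)⁻¹) / (Fintype.card ι - 1) ^ 2 * g m :=
      mul_le_mul_of_nonneg_right (div_sum_le_sum_erase_mul_inv_div hr m) (hg m)
    _ = _ := by
      rw [div_mul_eq_mul_div, Finset.sum_mul]
      simp only [mul_right_comm]

theorem sum_pi_prod_mul_sum_div_sum_mul_le [Fintype α] {p w h : α → K} (hp₀ : ∀ a, 0 ≤ p a)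
    (hp : ∑ a, p a = 1) (hw : ∀ a, 0 < p a → 0 < w a) (hh : ∀ a, 0 ≤ h a) :
    ∑ C : ι → α, (∏ k, p (C k)) * ∑ m, w (C m) / (∑ j, w (C j)) * h (C m) ≤
      (∑ a, p a * (w a)⁻¹) * (Fintype.card ι / (Fintype.card ι - 1)) *
        ∑ a, p a * (w a * h a) := by
  have card_sub_one_pos : (0 : K) < Fintype.card ι - 1 :=
    sub_pos.2 (by exact_mod_cast Fintype.one_lt_card)
  have bound (C : ι → α) : (∏ k, p (C k)) * ∑ m, w (C m) / (∑ j, w (C j)) * h (C m) ≤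
      (∏ k, p (C k)) * ((∑ m, ∑ j ∈ Finset.univ.erase m, w (C m) * h (C m) * (w (C j))⁻¹) /
        (Fintype.card ι - 1) ^ 2) := by
    by_cases null : ∏ k, p (C k) = 0
    · simp only [null, zero_mul, le_refl]
    have weight_pos (j : ι) : 0 < w (C j) :=
      hw _ <| (hp₀ _).lt_of_ne' (Finset.prod_ne_zero_iff.1 null j (Finset.mem_univ j))
    exact mul_le_mul_of_nonneg_left (sum_div_sum_mul_le weight_pos fun _ => hh _)
      (Finset.prod_nonneg fun _ _ => hp₀ _)
  calc
    _ ≤ _ := Finset.sum_le_sum fun C _ => bound C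
    _ = Fintype.card ι * (Fintype.card ι - 1) *
          ((∑ a, p a * (w a * h a)) * ∑ a, p a * (w a)⁻¹) / (Fintype.card ι - 1) ^ 2 := by
      rw [← sum_pi_prod_mul_sum_sum_erase hp (fun a => w a * h a) fun a => (w a)⁻¹, Finset.sum_div]
      simp only [mul_div_assoc]
    _ = _ := by field_simp

end SelfNormalizedWeights

section ChiSquared

variable {𝒞 : Type*} [Fintype 𝒞] {pC pQC : 𝒞 → ℝ}

lemma chiSq_add_one (hpQC0 : ∀ c, 0 ≤ pQC c) (hac : ∀ c, pQC c = 0 → pC c = 0) :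
    chiSq pC pQC + 1 = ∑ c, pC c * (pQC c / pC c)⁻¹ := by
  rw [chiSq, sub_add_cancel]
  refine Finset.sum_congr rfl fun c _ => ?_
  rcases (hpQC0 c).eq_or_lt' with hc | hc
  · simp [hc, hac c hc]
  · rw [Set.indicator_of_mem (by exact hc), inv_div, sq, mul_div_assoc]

lemma chiSq_add_one_nonneg : 0 ≤ chiSq pC pQC + 1 := by
  rw [chiSq, sub_add_cancel]
  exact Finset.sum_nonneg fun c _ =>
    Set.indicator_nonneg (fun _ hc => div_nonneg (sq_nonneg _) (le_of_lt hc)) c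

end ChiSquared

theorem stmt7_general {𝒞 : Type*} [Fintype 𝒞]
    (pC pQC : 𝒞 → ℝ)
    (hpC0 : ∀ c, 0 ≤ pC c) (hpQC0 : ∀ c, 0 ≤ pQC c)
    (hpC1 : ∑ c, pC c = 1)
    (hac : ∀ c, pQC c = 0 → pC c = 0)
    (nc : ℕ) (hnc : 2 ≤ nc)
    (h : 𝒞 → ℝ) (hh : ∀ c, 0 ≤ h c) :
    ∑ C : Fin nc → 𝒞, (∏ j, pC (C j)) *
        ∑ m : Fin nc,
          ((pQC (C m) / pC (C m)) / ∑ j, pQC (C j) / pC (C j)) * h (C m)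
      ≤ (chiSq pC pQC + 1) * ((nc : ℝ) / ((nc : ℝ) - 1)) * ∑ c, pQC c * h c := by
  have : Nontrivial (Fin nc) := Fin.nontrivial_iff_two_le.2 hnc
  have nc_sub_one_pos : (0 : ℝ) < nc - 1 := sub_pos.2 (by exact_mod_cast hnc)
  have ratio_pos (c : 𝒞) (hc : 0 < pC c) : 0 < pQC c / pC c :=
    div_pos ((hpQC0 c).lt_of_ne' (mt (hac c) hc.ne')) hc
  calc
    _ ≤ (chiSq pC pQC + 1) * ((nc : ℝ) / (nc - 1)) * ∑ c, pC c * (pQC c / pC c * h c) := by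
      simpa only [chiSq_add_one hpQC0 hac, Fintype.card_fin] using
        sum_pi_prod_mul_sum_div_sum_mul_le (ι := Fin nc) hpC0 hpC1 ratio_pos hh
    _ ≤ _ := mul_le_mul_of_nonneg_left (sum_mul_div_mul_le _ (fun c _ => hpQC0 c) fun c _ => hh c)
      (mul_nonneg chiSq_add_one_nonneg (by positivity))

/-- expected value of a nonnegative function of the block selected
by importance sampling, bounded via the chi-squared divergence. -/
theorem stmt7 {𝒞 : Type*} [Fintype 𝒞]
    (pC pQC : 𝒞 → ℝ)
    (hpC0 : ∀ c, 0 ≤ pC c) (hpQC0 : ∀ c, 0 ≤ pQC c)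
    (hpC1 : ∑ c, pC c = 1) (hpQC1 : ∑ c, pQC c = 1)
    (hac1 : ∀ c, pC c = 0 → pQC c = 0)
    (hac2 : ∀ c, pQC c = 0 → pC c = 0)
    (nc : ℕ) (hnc : 2 ≤ nc)
    (h : 𝒞 → ℝ) (hh : ∀ c, 0 ≤ h c) :
    ∑ C : Fin nc → 𝒞, (∏ j, pC (C j)) *
        ∑ m : Fin nc,
          ((pQC (C m) / pC (C m)) / ∑ j, pQC (C j) / pC (C j)) * h (C m)
      ≤ (chiSq pC pQC + 1) * ((nc : ℝ) / ((nc : ℝ) - 1)) * ∑ c, pQC c * h c :=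
  stmt7_general pC pQC hpC0 hpQC0 hpC1 hac2 nc hnc h hh
end
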